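/- Exactness is closed under wedges in the following two senses: (1) if X is an exact pseudo-metric space, S is any set, and for each s ∈ S, (A_s, x_s) is a pointed isometric copy of X (i.e., A_s is isometric to X and x_s ∈ A_s), then the wedge ⋁_{s∈S}(A_s, x_s) is exact; (2) if {X_s}_{s∈S} is a finite family of exact pseudo-metric spaces, then for any choice of basepoints x_s ∈ X_s the wedge ⋁_{s∈S}(X_s, x_s) is exact. -/

import Mathlib

open scoped ENNReal

/-- Exactness of a space with a given distance function `d`: for all `R, ε > 0` there is an
`(ε,R)`-continuous partition of unity whose strata are uniformly bounded. -/
def ExactD {Y : Type} (d : Y → Y → ℝ) : Prop :=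
  ∀ R ε : ℝ, 0 < R → 0 < ε → ∃ (T : Type) (φ : T → Y → ℝ),
    (∀ t y, 0 ≤ φ t y ∧ φ t y ≤ 1) ∧
    (∀ y, HasSum (fun t => φ t y) 1) ∧
    (∀ x y : Y, d x y ≤ R → (∑' t, |φ t x - φ t y|) ≤ ε) ∧
    (∃ D : ℝ, 0 < D ∧ ∀ t : T, ∀ x y : Y, 0 < φ t x → 0 < φ t y → d x y ≤ D)

open Classical in
/-- The wedge pseudo-distance on the disjoint union of pointed pseudo-metric spaces
`(A_s, p_s)`: within one component it is the original distance, across components it is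
`d(a, p_s) + d(p_t, b)`. -/
noncomputable def wedgeDist {S : Type} {A : S → Type} [∀ s, PseudoMetricSpace (A s)]
    (p : ∀ s, A s) : (Σ s, A s) → (Σ s, A s) → ℝ
  | ⟨s, a⟩, ⟨t, b⟩ =>
    if h : s = t then dist a (h.symm ▸ b) else dist a (p s) + dist (p t) b

/-!
On the wedge, let `r` be the distance to the basepoint. It is `1`-Lipschitz, and two points `x`, `y`
of different components are at distance `r x + r y`. Take a partition of unity on each component,
all with the same parameters, and let `Φ` be their disjoint union. It has uniformly bounded strata,
but `‖Φ x - Φ y‖₁ = 2` whenever `x` and `y` lie in different components. So damp it by the slowly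
varying cutoff `f = min 1 (r / L)`, and let one additional function `1 - f`, supported on the ball
of radius `L` about the basepoint, carry the missing mass. Nearby points of different components are
both close to the basepoint, where `f` is small, and therefore `‖f x Φ x - f y Φ y‖₁` is small as
well.
-/

section HasSum

variable {α M : Type*} [AddCommMonoid M] [TopologicalSpace M] [ContinuousAdd M]

theorem hasSum_option {f : Option α → M} {a : M} (hf : HasSum (fun i => f (some i)) a) :
    HasSum f (f none + a) := by
  classical
  have hnone : HasSum (Pi.single none (f none) : Option α → M) (f none) :=
    hasSum_pi_single none (f none)
  have hsome : HasSum (Function.extend some (fun i => f (some i)) 0) a :=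
    (hasSum_extend_zero (Option.some_injective α)).2 hf
  convert hnone.add hsome using 1
  funext i
  cases i with
  | none => simp
  | some i => simp [(Option.some_injective α).extend_apply]

end HasSum

section PartitionOfUnity

variable {T Y Z : Type*} {d : Y → Y → ℝ} {R ε D : ℝ} {φ : T → Y → ℝ}

/-- A partition of unity on `Y` indexed by `T`. The bound `φ t y ≤ 1` is a consequence,
`IsPartitionOfUnity.le_one`. -/
structure IsPartitionOfUnity (φ : T → Y → ℝ) : Prop where
  nonneg : ∀ t y, 0 ≤ φ t y
  hasSum_one : ∀ y, HasSum (fun t => φ t y) 1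

/-- The distance `‖φ(x) - φ(y)‖₁` for a family of functions `φ` regarded as a map into `ℓ¹(T)`. -/
noncomputable def l1Dist (φ : T → Y → ℝ) (x y : Y) : ℝ :=
  ∑' t, |φ t x - φ t y|

/-- An `(ε, R)`-continuous partition of unity, with respect to the distance function `d`, whose
strata have diameter at most `D`. -/
structure IsUniformPartition (d : Y → Y → ℝ) (R ε D : ℝ) (φ : T → Y → ℝ) : Prop
    extends IsPartitionOfUnity φ where
  l1Dist_le : ∀ x y, d x y ≤ R → l1Dist φ x y ≤ ε
  dist_le : ∀ t x y, 0 < φ t x → 0 < φ t y → d x y ≤ D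

theorem l1Dist_nonneg (φ : T → Y → ℝ) (x y : Y) : 0 ≤ l1Dist φ x y :=
  tsum_nonneg fun _ => abs_nonneg _

namespace IsPartitionOfUnity

theorem le_one (hφ : IsPartitionOfUnity φ) (t : T) (y : Y) : φ t y ≤ 1 :=
  le_hasSum (hφ.hasSum_one y) t fun t' _ => hφ.nonneg t' y

theorem hasSum_l1Dist (hφ : IsPartitionOfUnity φ) (x y : Y) :
    HasSum (fun t => |φ t x - φ t y|) (l1Dist φ x y) :=
  ((hφ.hasSum_one x).summable.sub (hφ.hasSum_one y).summable).abs.hasSum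

theorem l1Dist_le_two (hφ : IsPartitionOfUnity φ) (x y : Y) : l1Dist φ x y ≤ 2 := by
  have hsum : HasSum (fun t => φ t x + φ t y) 2 := by
    simpa only [one_add_one_eq_two] using (hφ.hasSum_one x).add (hφ.hasSum_one y)
  refine hasSum_le (fun t => ?_) (hφ.hasSum_l1Dist x y) hsum
  simpa only [abs_of_nonneg (hφ.nonneg t _)] using abs_sub (φ t x) (φ t y)

end IsPartitionOfUnity

theorem IsUniformPartition.comp {d' : Z → Z → ℝ} (hφ : IsUniformPartition d R ε D φ) {e : Z → Y}
    (he : ∀ a b, d (e a) (e b) = d' a b) :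
    IsUniformPartition d' R ε D fun t z => φ t (e z) where
  nonneg t z := hφ.nonneg t (e z)
  hasSum_one z := hφ.hasSum_one (e z)
  l1Dist_le a b hab := hφ.l1Dist_le (e a) (e b) ((he a b).trans_le hab)
  dist_le t a b ha hb := (he a b).symm.trans_le (hφ.dist_le t (e a) (e b) ha hb)

theorem IsUniformPartition.mono {D' : ℝ} (hφ : IsUniformPartition d R ε D φ) (hD : D ≤ D') :
    IsUniformPartition d R ε D' φ where
  __ := hφ
  dist_le t x y hx hy := (hφ.dist_le t x y hx hy).trans hD

end PartitionOfUnity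

section DampedPartition

variable {T Y : Type*} {f : Y → ℝ} {φ : T → Y → ℝ}

/-- The partition of unity `φ` damped by the function `f`; the missing mass `1 - f` is carried by
the additional index `none`. -/
def dampedPartition (f : Y → ℝ) (φ : T → Y → ℝ) : Option T → Y → ℝ
  | none, y => 1 - f y
  | some t, y => f y * φ t y

theorem IsPartitionOfUnity.damped (hφ : IsPartitionOfUnity φ) (hf : ∀ y, f y ∈ Set.Icc 0 1) :
    IsPartitionOfUnity (dampedPartition f φ) where
  nonneg
    | none, y => sub_nonneg.2 (hf y).2
    | some t, y => mul_nonneg (hf y).1 (hφ.nonneg t y)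
  hasSum_one y := by
    have hsome : HasSum (fun t => dampedPartition f φ (some t) y) (f y) := by
      simpa only [dampedPartition, mul_one] using (hφ.hasSum_one y).mul_left (f y)
    simpa only [dampedPartition, sub_add_cancel] using
      hasSum_option (f := fun i => dampedPartition f φ i y) hsome

theorem IsPartitionOfUnity.l1Dist_dampedPartition_le (hφ : IsPartitionOfUnity φ)
    (hf : ∀ y, f y ∈ Set.Icc 0 1) (x y : Y) :
    l1Dist (dampedPartition f φ) x y ≤ 2 * |f x - f y| + f y * l1Dist φ x y := by
  let g : Option T → ℝ
    | none => |f x - f y|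
    | some t => |f x - f y| * φ t x + f y * |φ t x - φ t y|
  have hg : HasSum g (|f x - f y| + (|f x - f y| * 1 + f y * l1Dist φ x y)) :=
    hasSum_option (((hφ.hasSum_one x).mul_left _).add ((hφ.hasSum_l1Dist x y).mul_left _))
  have hle : ∀ i, |dampedPartition f φ i x - dampedPartition f φ i y| ≤ g i
    | none => by
      simp only [dampedPartition, g, sub_sub_sub_cancel_left, abs_sub_comm (f y), le_refl]
    | some t => calc
        |f x * φ t x - f y * φ t y| = |(f x - f y) * φ t x + f y * (φ t x - φ t y)| := by
          congr 1
          ring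
        _ ≤ |(f x - f y) * φ t x| + |f y * (φ t x - φ t y)| := abs_add_le _ _
        _ = |f x - f y| * φ t x + f y * |φ t x - φ t y| := by
          rw [abs_mul, abs_mul, abs_of_nonneg (hφ.nonneg t x), abs_of_nonneg (hf y).1]
  calc l1Dist (dampedPartition f φ) x y
      ≤ |f x - f y| + (|f x - f y| * 1 + f y * l1Dist φ x y) :=
        hasSum_le hle ((hφ.damped hf).hasSum_l1Dist x y) hg
    _ = 2 * |f x - f y| + f y * l1Dist φ x y := by ring

end DampedPartition

section SigmaPartition

variable {S : Type*} {A T : S → Type*} {φ : ∀ s, T s → A s → ℝ}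

/-- The disjoint union of the partitions of unity `φ s`, each extended by zero outside its own
component. -/
noncomputable def sigmaPartition (φ : ∀ s, T s → A s → ℝ) (i : Σ s, T s) (x : Σ s, A s) : ℝ :=
  Function.extend (Sigma.mk x.1) (fun t => φ x.1 t x.2) 0 i

theorem sigmaPartition_same (φ : ∀ s, T s → A s → ℝ) (s : S) (t : T s) (a : A s) :
    sigmaPartition φ ⟨s, t⟩ ⟨s, a⟩ = φ s t a :=
  sigma_mk_injective.extend_apply _ _ t

theorem sigmaPartition_of_ne (φ : ∀ s, T s → A s → ℝ) {i : Σ s, T s} {x : Σ s, A s}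
    (h : i.1 ≠ x.1) : sigmaPartition φ i x = 0 :=
  Function.extend_apply' _ _ _ fun ⟨_, ht⟩ => h (congrArg Sigma.fst ht).symm

theorem exists_eq_of_sigmaPartition_pos {s : S} {t : T s} {x : Σ s, A s}
    (hx : 0 < sigmaPartition φ ⟨s, t⟩ x) : ∃ a, x = ⟨s, a⟩ ∧ 0 < φ s t a := by
  obtain rfl : s = x.1 := by
    by_contra hne
    exact hx.ne' (sigmaPartition_of_ne φ hne)
  exact ⟨x.2, rfl, by rwa [← sigmaPartition_same φ]⟩

theorem IsPartitionOfUnity.sigma (hφ : ∀ s, IsPartitionOfUnity (φ s)) :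
    IsPartitionOfUnity (sigmaPartition φ) where
  nonneg := by
    rintro ⟨s, t⟩ ⟨s', a⟩
    obtain rfl | hne := eq_or_ne s s'
    · exact sigmaPartition_same φ s t a ▸ (hφ s).nonneg t a
    · exact (sigmaPartition_of_ne φ hne).ge
  hasSum_one x := (hasSum_extend_zero sigma_mk_injective).2 ((hφ x.1).hasSum_one x.2)

theorem l1Dist_sigmaPartition_same (φ : ∀ s, T s → A s → ℝ) (s : S) (a b : A s) :
    l1Dist (sigmaPartition φ) ⟨s, a⟩ ⟨s, b⟩ = l1Dist (φ s) a b := by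
  have hsupp : (Function.support fun i =>
      |sigmaPartition φ i ⟨s, a⟩ - sigmaPartition φ i ⟨s, b⟩|) ⊆ Set.range (Sigma.mk s) := by
    rintro ⟨s', t⟩ hi
    obtain rfl | hne := eq_or_ne s' s
    · exact ⟨t, rfl⟩
    · simp [sigmaPartition_of_ne φ (i := ⟨s', t⟩) (x := ⟨s, _⟩) hne] at hi
  simpa only [l1Dist, sigmaPartition_same] using (sigma_mk_injective.tsum_eq hsupp).symm

end SigmaPartition

section Cutoff

variable {L : ℝ}

/-- The cutoff profile `min 1 (r / L)`, which rises from `0` to `1` at slope `1 / L`. -/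
noncomputable def cutoff (L r : ℝ) : ℝ :=
  min 1 (r / L)

theorem cutoff_mem_Icc (hL : 0 < L) {r : ℝ} (hr : 0 ≤ r) : cutoff L r ∈ Set.Icc 0 1 :=
  ⟨le_min zero_le_one (by positivity), min_le_left _ _⟩

theorem cutoff_le (L r : ℝ) : cutoff L r ≤ r / L :=
  min_le_right _ _

theorem lt_of_cutoff_lt_one (hL : 0 < L) {r : ℝ} (h : cutoff L r < 1) : r < L := by
  rwa [cutoff, min_lt_iff, or_iff_right (lt_irrefl _), div_lt_one hL] at h

theorem abs_cutoff_sub_cutoff_le (hL : 0 < L) (r r' : ℝ) :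
    |cutoff L r - cutoff L r'| ≤ |r - r'| / L := by
  simpa [← sub_div, abs_div, abs_of_pos hL, cutoff, div_nonneg, hL.le] using
    abs_min_sub_min_le_max 1 (r / L) 1 (r' / L)

end Cutoff

section Wedge

variable {S : Type} {A : S → Type} [∀ s, PseudoMetricSpace (A s)] (p : ∀ s, A s)

/-- The distance to the basepoint of the wedge. -/
def wedgeRadius (x : Σ s, A s) : ℝ :=
  dist x.2 (p x.1)

theorem wedgeRadius_nonneg (x : Σ s, A s) : 0 ≤ wedgeRadius p x :=
  dist_nonneg

theorem wedgeDist_same (s : S) (a b : A s) : wedgeDist p ⟨s, a⟩ ⟨s, b⟩ = dist a b := by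
  simp [wedgeDist]

theorem wedgeDist_of_ne {x y : Σ s, A s} (h : x.1 ≠ y.1) :
    wedgeDist p x y = wedgeRadius p x + wedgeRadius p y := by
  simp [wedgeDist, wedgeRadius, h, dist_comm]

theorem wedgeDist_le (x y : Σ s, A s) : wedgeDist p x y ≤ wedgeRadius p x + wedgeRadius p y := by
  obtain ⟨s, a⟩ := x
  obtain ⟨t, b⟩ := y
  obtain rfl | hne := eq_or_ne s t
  · exact (wedgeDist_same p s a b).trans_le (dist_triangle_right a b (p s))
  · exact (wedgeDist_of_ne p hne).le

theorem abs_wedgeRadius_sub_le (x y : Σ s, A s) :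
    |wedgeRadius p x - wedgeRadius p y| ≤ wedgeDist p x y := by
  obtain ⟨s, a⟩ := x
  obtain ⟨t, b⟩ := y
  obtain rfl | hne := eq_or_ne s t
  · exact (abs_dist_sub_le a b (p s)).trans_eq (wedgeDist_same p s a b).symm
  · rw [wedgeDist_of_ne p hne]
    simpa only [abs_of_nonneg (wedgeRadius_nonneg p _)] using
      abs_sub (wedgeRadius p ⟨s, a⟩) (wedgeRadius p ⟨t, b⟩)

variable {T : S → Type*} {R ε D L : ℝ} {φ : ∀ s, T s → A s → ℝ}

/-- The partition of unity on the wedge obtained from partitions of unity `φ s` on its components by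
damping their disjoint union near the basepoint, at scale `L`. -/
noncomputable def wedgePartition (L : ℝ) (φ : ∀ s, T s → A s → ℝ) :
    Option (Σ s, T s) → (Σ s, A s) → ℝ :=
  dampedPartition (fun x => cutoff L (wedgeRadius p x)) (sigmaPartition φ)

theorem cutoff_wedgeRadius_mul_l1Dist_le (hL : 0 < L) (hRL : R / L ≤ ε / 2)
    (hφ : ∀ s, IsUniformPartition dist R ε D (φ s)) {x y : Σ s, A s} (hxy : wedgeDist p x y ≤ R) :
    cutoff L (wedgeRadius p y) * l1Dist (sigmaPartition φ) x y ≤ ε := by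
  have hf := cutoff_mem_Icc hL (wedgeRadius_nonneg p y)
  obtain ⟨s, a⟩ := x
  obtain ⟨t, b⟩ := y
  obtain rfl | hne := eq_or_ne s t
  · rw [wedgeDist_same] at hxy
    rw [l1Dist_sigmaPartition_same]
    exact (mul_le_of_le_one_left (l1Dist_nonneg _ _ _) hf.2).trans ((hφ s).l1Dist_le a b hxy)
  · have hr : wedgeRadius p ⟨t, b⟩ ≤ R := by
      rw [wedgeDist_of_ne p hne] at hxy
      linarith [wedgeRadius_nonneg p ⟨s, a⟩]
    have hsmall : cutoff L (wedgeRadius p ⟨t, b⟩) ≤ ε / 2 := calc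
      _ ≤ wedgeRadius p ⟨t, b⟩ / L := cutoff_le _ _
      _ ≤ R / L := by gcongr
      _ ≤ ε / 2 := hRL
    have htwo := (IsPartitionOfUnity.sigma fun s => (hφ s).toIsPartitionOfUnity).l1Dist_le_two
      ⟨s, a⟩ ⟨t, b⟩
    calc _ ≤ cutoff L (wedgeRadius p ⟨t, b⟩) * 2 := mul_le_mul_of_nonneg_left htwo hf.1
      _ ≤ ε := by linarith

theorem wedgeDist_le_of_wedgePartition_pos (hL : 0 < L)
    (hφ : ∀ s, IsUniformPartition dist R ε D (φ s)) (i : Option (Σ s, T s)) (x y : Σ s, A s)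
    (hx : 0 < wedgePartition p L φ i x) (hy : 0 < wedgePartition p L φ i y) :
    wedgeDist p x y ≤ max D (2 * L) := by
  cases i with
  | none =>
    have hxL := lt_of_cutoff_lt_one hL (sub_pos.1 hx)
    have hyL := lt_of_cutoff_lt_one hL (sub_pos.1 hy)
    exact (wedgeDist_le p x y).trans (le_max_of_le_right (by linarith))
  | some i =>
    have hf (z) := (cutoff_mem_Icc hL (wedgeRadius_nonneg p z)).1
    obtain ⟨a, rfl, ha⟩ := exists_eq_of_sigmaPartition_pos (pos_of_mul_pos_right hx (hf x))
    obtain ⟨b, rfl, hb⟩ := exists_eq_of_sigmaPartition_pos (pos_of_mul_pos_right hy (hf y))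
    rw [wedgeDist_same]
    exact le_max_of_le_left ((hφ i.1).dist_le i.2 a b ha hb)

theorem IsUniformPartition.wedge (hL : 0 < L) (hRL : R / L ≤ ε / 2)
    (hφ : ∀ s, IsUniformPartition dist R ε D (φ s)) :
    IsUniformPartition (wedgeDist p) R (2 * ε) (max D (2 * L)) (wedgePartition p L φ) where
  toIsPartitionOfUnity :=
    (IsPartitionOfUnity.sigma fun s => (hφ s).toIsPartitionOfUnity).damped
      fun x => cutoff_mem_Icc hL (wedgeRadius_nonneg p x)
  l1Dist_le x y hxy := by
    have hcutoff : |cutoff L (wedgeRadius p x) - cutoff L (wedgeRadius p y)| ≤ ε / 2 := calc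
      _ ≤ |wedgeRadius p x - wedgeRadius p y| / L := abs_cutoff_sub_cutoff_le hL _ _
      _ ≤ R / L := by gcongr; exact (abs_wedgeRadius_sub_le p x y).trans hxy
      _ ≤ ε / 2 := hRL
    have hdamped := (IsPartitionOfUnity.sigma fun s =>
      (hφ s).toIsPartitionOfUnity).l1Dist_dampedPartition_le
        (fun x => cutoff_mem_Icc hL (wedgeRadius_nonneg p x)) x y
    have hsigma := cutoff_wedgeRadius_mul_l1Dist_le p hL hRL hφ hxy
    exact hdamped.trans (by linarith)
  dist_le := wedgeDist_le_of_wedgePartition_pos p hL hφ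

end Wedge

theorem exactD_iff {Y : Type} {d : Y → Y → ℝ} :
    ExactD d ↔ ∀ R ε : ℝ, 0 < R → 0 < ε →
      ∃ (T : Type) (φ : T → Y → ℝ) (D : ℝ), IsUniformPartition d R ε D φ := by
  refine forall₄_congr fun R ε _ _ => exists₂_congr fun T φ => ?_
  constructor
  · rintro ⟨hIcc, hsum, hcont, D, -, hD⟩
    exact ⟨D, ⟨fun t y => (hIcc t y).1, hsum⟩, hcont, hD⟩
  · rintro ⟨D, hφ⟩
    exact ⟨fun t y => ⟨hφ.nonneg t y, hφ.le_one t y⟩, hφ.hasSum_one, hφ.l1Dist_le, max D 1,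
      by positivity, (hφ.mono (le_max_left D 1)).dist_le⟩

section EquiExact

variable {S : Type*} {A : S → Type*} {d : ∀ s, A s → A s → ℝ}

/-- Equi-exactness of a family of spaces with distance functions `d s`: for each `R` and `ε`, the
partitions of unity that witness exactness of the members can be chosen with a common bound on the
diameters of their strata. -/
def EquiExact (d : ∀ s, A s → A s → ℝ) : Prop :=
  ∀ R ε : ℝ, 0 < R → 0 < ε → ∃ (T : S → Type) (φ : ∀ s, T s → A s → ℝ) (D : ℝ),
    ∀ s, IsUniformPartition (d s) R ε D (φ s)

theorem ExactD.equiExact_of_isometries {X : Type} {dX : X → X → ℝ} (hX : ExactD dX)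
    {e : ∀ s, A s → X} (he : ∀ s a b, dX (e s a) (e s b) = d s a b) : EquiExact d := by
  intro R ε hR hε
  obtain ⟨T, φ, D, hφ⟩ := exactD_iff.1 hX R ε hR hε
  exact ⟨fun _ => T, fun s t a => φ t (e s a), D, fun s => hφ.comp (he s)⟩

theorem EquiExact.of_finite [Finite S] {X : S → Type} {dX : ∀ s, X s → X s → ℝ}
    (hX : ∀ s, ExactD (dX s)) : EquiExact dX := by
  intro R ε hR hε
  choose T φ D hφ using fun s => exactD_iff.1 (hX s) R ε hR hε
  obtain ⟨M, hM⟩ := Finite.exists_le D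
  exact ⟨T, φ, M, fun s => (hφ s).mono (hM s)⟩

end EquiExact

theorem stmt6_general {S : Type} {A : S → Type} [∀ s, PseudoMetricSpace (A s)]
    (hA : EquiExact fun s => (dist : A s → A s → ℝ)) (p : ∀ s, A s) : ExactD (wedgeDist p) := by
  refine exactD_iff.2 fun R ε hR hε => ?_
  obtain ⟨T, φ, D, hφ⟩ := hA R (ε / 2) hR (half_pos hε)
  have hRL : R / (4 * R / ε) ≤ ε / 2 / 2 := le_of_eq (by field_simp; norm_num)
  have hwedge := IsUniformPartition.wedge p (by positivity) hRL hφ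
  rw [mul_div_cancel₀ ε two_ne_zero] at hwedge
  exact ⟨_, _, _, hwedge⟩

/-- Exactness is closed under wedges: (1) the wedge of arbitrarily many
pointed isometric copies of an exact pseudo-metric space is exact; (2) the wedge of a
finite family of exact pseudo-metric spaces is exact for any choice of basepoints. -/
theorem stmt6 :
    (∀ (X : Type) [PseudoMetricSpace X], ExactD (fun a b : X => dist a b) →
      ∀ (S : Type) (A : S → Type) [∀ s, PseudoMetricSpace (A s)],
        ∀ e : ∀ s, A s ≃ X, (∀ s (a b : A s), dist (e s a) (e s b) = dist a b) →
        ∀ p : ∀ s, A s, ExactD (wedgeDist p)) ∧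
    (∀ (S : Type) [Finite S] (X : S → Type) [∀ s, PseudoMetricSpace (X s)],
      (∀ s, ExactD (fun a b : X s => dist a b)) →
      ∀ p : ∀ s, X s, ExactD (wedgeDist p)) :=
  ⟨fun _ _ hX _ _ _ _ he => stmt6_general (hX.equiExact_of_isometries he),
    fun _ _ _ _ hX => stmt6_general (.of_finite hX)⟩
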